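/- arXiv:1605.00978 — 2 statements merged into one kernel-verified Lean document; each statement's English description precedes it below -/
import Mathlib

section
/- (a) If 𝓜° is a standard module with |D_{𝓜°}| = d° and 0 ≤ a ≤ d°, then the ℛ-submodule z^a𝓜° ⊆ 𝒪 satisfies z^{2δ}𝒪 ⊆ z^a𝓜° and dim_ℂ(𝒪/z^a𝓜°) = δ − d° + a. (b) Conversely, if 𝓜 ⊆ 𝒪 is an ℛ-submodule with z^{2δ}𝒪 ⊆ 𝓜 and dim_ℂ(𝒪/𝓜) = δ − d for some 0 ≤ d ≤ δ, then, setting a = min{ν(x) : 0 ≠ x ∈ 𝓜}, every element of 𝓜 is divisible by z^a and the module 𝓜° = {f ∈ 𝒪 : z^a f ∈ 𝓜} is a standard module with |D_{𝓜°}| = d + a. -/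
open PowerSeries

noncomputable section

/-- `𝒪 = ℂ⟦z⟧`, the ring of formal power series over `ℂ`. -/
abbrev 𝒪 : Type := PowerSeries ℂ

/-- `ν(f)`: the order of a power series (least `n` with nonzero coefficient);
only meaningful for `f ≠ 0`. -/
noncomputable def ord (f : 𝒪) : ℕ := sInf {n : ℕ | PowerSeries.coeff n f ≠ 0}

/-- The value semigroup `Γ = {ν(x) : 0 ≠ x ∈ ℛ}` of a subalgebra `ℛ ⊆ 𝒪`. -/
def SGamma (R : Subalgebra ℂ 𝒪) : Set ℕ := {n | ∃ x ∈ R, x ≠ (0:𝒪) ∧ ord x = n}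

/-- The set of gaps `G = ℕ ∖ Γ`. -/
def Gaps (R : Subalgebra ℂ 𝒪) : Set ℕ := (SGamma R)ᶜ

/-- `Δ` is a `Γ`-module: `Γ + Δ ⊆ Δ`. -/
def IsGammaModule (Γ Δ : Set ℕ) : Prop := ∀ a ∈ Γ, ∀ d ∈ Δ, a + d ∈ Δ

/-- `Δ_𝓜 = {ν(x) : 0 ≠ x ∈ 𝓜}` for an `ℛ`-submodule `𝓜 ⊆ 𝒪`. -/
def DeltaM (R : Subalgebra ℂ 𝒪) (M : Submodule ↥R 𝒪) : Set ℕ :=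
  {n | ∃ x ∈ M, x ≠ (0:𝒪) ∧ ord x = n}

/-- `D_𝓜 = Δ_𝓜 ∩ G`, the set of added gaps. -/
def Dset (R : Subalgebra ℂ 𝒪) (M : Submodule ↥R 𝒪) : Set ℕ := DeltaM R M ∩ Gaps R

/-- A standard module: a finitely generated `ℛ`-submodule of `𝒪` containing an
element of order `0`. -/
def IsStd (R : Subalgebra ℂ 𝒪) (M : Submodule ↥R 𝒪) : Prop :=
  M.FG ∧ ∃ x ∈ M, x ≠ (0:𝒪) ∧ ord x = 0

/-- `c ≥ 1` is the conductor of `ℛ`: the minimal exponent with `z^c𝒪 ⊆ ℛ`. -/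
def HasConductor (R : Subalgebra ℂ 𝒪) (c : ℕ) : Prop :=
  1 ≤ c ∧ (∀ f : 𝒪, (PowerSeries.X : 𝒪)^c * f ∈ R) ∧
    ∀ c' : ℕ, (∀ f : 𝒪, (PowerSeries.X : 𝒪)^c' * f ∈ R) → c ≤ c'

/-- `z^j𝒪` as a `ℂ`-submodule of `𝒪`. -/
def zO (j : ℕ) : Submodule ℂ 𝒪 :=
  LinearMap.range (LinearMap.mulLeft ℂ ((PowerSeries.X : 𝒪)^j))

/-- `𝔪𝓜` as a `ℂ`-submodule of `𝒪`, where `𝔪 = {x ∈ ℛ : x = 0 or ν(x) > 0}`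
is the maximal ideal of `ℛ`. -/
def mSmul (R : Subalgebra ℂ 𝒪) (M : Submodule ↥R 𝒪) : Submodule ℂ 𝒪 :=
  Submodule.span ℂ {z : 𝒪 | ∃ r ∈ (R : Set 𝒪), ∃ y ∈ M, (r = 0 ∨ 0 < ord r) ∧ z = r * y}

/-- `dim_ℂ (A / B)` for `ℂ`-subspaces; intended for `B ≤ A`. -/
noncomputable def quotDim (A B : Submodule ℂ 𝒪) : ℕ :=
  Module.finrank ℂ (↥A ⧸ Submodule.comap A.subtype B)

/-- `D_i = D_0 ∪ {g_1, …, g_i}` (the gaps `g` are indexed by `1, …, m`). -/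
def DFlagSet (D0 : Set ℕ) (g : ℕ → ℕ) (i : ℕ) : Set ℕ := D0 ∪ g '' Set.Icc 1 i

/-- `(D_0, …, D_m)` with `D_i = D_0 ∪ {g_1 < … < g_i}` is a `D`-flag:
all `Δ_i = Γ ∪ D_i` are `Γ`-modules. -/
def IsDFlag (R : Subalgebra ℂ 𝒪) (m : ℕ) (D0 : Set ℕ) (g : ℕ → ℕ) : Prop :=
  D0 ⊆ Gaps R ∧ StrictMonoOn g (Set.Icc 1 m) ∧
  (∀ i, 1 ≤ i → i ≤ m → g i ∈ Gaps R \ D0) ∧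
  (∀ i ≤ m, IsGammaModule (SGamma R) (SGamma R ∪ DFlagSet D0 g i))

/-- A `D`-flag is admissible if it is realized by a flag of standard modules. -/
def IsAdmissibleFlag (R : Subalgebra ℂ 𝒪) (m : ℕ) (D0 : Set ℕ) (g : ℕ → ℕ) : Prop :=
  ∃ MM : ℕ → Submodule ↥R 𝒪, (∀ i, i < m → MM i ≤ MM (i+1)) ∧
    ∀ i ≤ m, IsStd R (MM i) ∧ Dset R (MM i) = DFlagSet D0 g i

/-- The subalgebra `ℂ[z^a, z^b + z^c] + z^N ℂ⟦z⟧` of `𝒪`. -/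
def Rring (a b c N : ℕ) : Subalgebra ℂ 𝒪 where
  carrier := {f : 𝒪 | ∃ p ∈ Algebra.adjoin ℂ
      ({(PowerSeries.X : 𝒪)^a, (PowerSeries.X : 𝒪)^b + (PowerSeries.X : 𝒪)^c} : Set 𝒪),
    ∃ g : 𝒪, f = p + (PowerSeries.X : 𝒪)^N * g}
  mul_mem' := by
    rintro x y ⟨p, hp, gx, rfl⟩ ⟨q, hq, gy, rfl⟩
    exact ⟨p * q, mul_mem hp hq,
      p * gy + gx * q + (PowerSeries.X : 𝒪)^N * (gx * gy), by ring⟩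
  one_mem' := ⟨1, one_mem _, 0, by ring⟩
  add_mem' := by
    rintro x y ⟨p, hp, gx, rfl⟩ ⟨q, hq, gy, rfl⟩
    exact ⟨p + q, add_mem hp hq, gx + gy, by ring⟩
  zero_mem' := ⟨0, zero_mem _, 0, by ring⟩
  algebraMap_mem' := fun r => ⟨algebraMap ℂ 𝒪 r, Subalgebra.algebraMap_mem _ r, 0, by ring⟩

/-- The ring `ℂ⟦z^4, z^{2u}+z^v⟧ = ℂ[z^4, z^{2u}+z^v] + z^{4u+v}ℂ⟦z⟧` for the
plane curve singularity with Puiseux exponents `(4, 2u, v)`. -/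
def Rcal (u v : ℕ) : Subalgebra ℂ 𝒪 := Rring 4 (2*u) v (4*u+v)

/-- The gap counting function `γ_Δ(ℓ) = |[ℓ,∞) ∖ Δ|`. -/
noncomputable def gapCount (Δ : Set ℕ) (ℓ : ℕ) : ℕ := Set.ncard {k : ℕ | ℓ ≤ k ∧ k ∉ Δ}

/-- `n = n(D)`: the smallest odd number in `(Δ ∪ {v}) ∩ [2u, ∞)`. -/
noncomputable def nOdd (u v : ℕ) (Δ : Set ℕ) : ℕ :=
  sInf {k : ℕ | Odd k ∧ 2*u ≤ k ∧ (k ∈ Δ ∨ k = v)}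

/-- The dimension change `μ_{D,g}` of Theorem `dimprop` (for the family `(4,2u,v)`),
where `Γ` is the value semigroup. -/
noncomputable def muDim (u v : ℕ) (Γ : Set ℕ) (D : Set ℕ) (gp : ℕ) : ℕ :=
  let Δ : Set ℕ := Γ ∪ D
  let Δ' : Set ℕ := Δ ∪ {gp}
  let n : ℕ := nOdd u v Δ
  if gp % 4 = 2 then
    (gapCount Δ' gp - gapCount Δ' (gp+4)) - (gapCount Δ' (gp+n) - gapCount Δ' (gp+4+n))
  else gapCount Δ' gp - gapCount Δ' (gp+4)


lemma ord_spec {f : 𝒪} (hf : f ≠ 0) : PowerSeries.coeff (ord f) f ≠ 0 := by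
  have : ({n : ℕ | PowerSeries.coeff n f ≠ 0}).Nonempty := by
    by_contra h
    rw [Set.not_nonempty_iff_eq_empty] at h
    apply hf
    ext n
    by_contra hn
    have : n ∈ ({n : ℕ | PowerSeries.coeff n f ≠ 0}) := by simpa using hn
    rw [h] at this
    exact this
  exact Nat.sInf_mem this

lemma coeff_lt_ord {f : 𝒪} {m : ℕ} (h : m < ord f) : PowerSeries.coeff m f = 0 := by
  by_contra hm
  exact absurd (Nat.sInf_le (s := {n : ℕ | PowerSeries.coeff n f ≠ 0}) hm) (not_le.2 h)

lemma X_pow_ord_dvd (f : 𝒪) : (PowerSeries.X : 𝒪)^(ord f) ∣ f :=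
  PowerSeries.X_pow_dvd_iff.2 fun _ hm => coeff_lt_ord hm

lemma ord_eq_of {f : 𝒪} {n : ℕ} (h : PowerSeries.coeff n f ≠ 0)
    (hd : (PowerSeries.X : 𝒪)^n ∣ f) : ord f = n := by
  apply le_antisymm
  · exact Nat.sInf_le h
  · by_contra hlt
    push Not at hlt
    have hf : f ≠ 0 := by rintro rfl; simp at h
    exact ord_spec hf (PowerSeries.X_pow_dvd_iff.1 hd _ hlt)

lemma ord_order {f : 𝒪} (hf : f ≠ 0) : f.order = ord f :=
  PowerSeries.order_eq_nat.2 ⟨ord_spec hf, fun _ h => coeff_lt_ord h⟩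

lemma ord_mul {f g : 𝒪} (hf : f ≠ 0) (hg : g ≠ 0) : ord (f * g) = ord f + ord g := by
  have h := PowerSeries.order_mul f g
  rw [ord_order hf, ord_order hg, ord_order (mul_ne_zero hf hg)] at h
  exact_mod_cast h

lemma ord_X_pow (a : ℕ) : ord ((PowerSeries.X : 𝒪)^a) = a :=
  ord_eq_of (by simp) dvd_rfl

lemma ord_X_pow_mul (a : ℕ) {f : 𝒪} (hf : f ≠ 0) :
    ord ((PowerSeries.X : 𝒪)^a * f) = a + ord f := by
  rw [ord_mul (pow_ne_zero _ PowerSeries.X_ne_zero) hf, ord_X_pow]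

/-- Filling-up lemma. -/
lemma fill (U : Submodule ℂ 𝒪) (N n0 : ℕ) (hN : ∀ f : 𝒪, (PowerSeries.X : 𝒪)^N * f ∈ U)
    (h : ∀ n, n0 ≤ n → ∃ u ∈ U, PowerSeries.coeff n u ≠ 0 ∧ (PowerSeries.X : 𝒪)^n ∣ u) :
    ∀ f : 𝒪, (PowerSeries.X : 𝒪)^n0 * f ∈ U := by
  have key : ∀ k n : ℕ, n0 ≤ n → N ≤ n + k → ∀ f : 𝒪, (PowerSeries.X : 𝒪)^n ∣ f → f ∈ U := by
    intro k
    induction k with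
    | zero =>
      intro n _ hn f hf
      obtain ⟨g, rfl⟩ := (pow_dvd_pow _ (by omega : N ≤ n)).trans hf
      exact hN g
    | succ k ih =>
      intro n h0 hn f hf
      obtain ⟨u, hu, hc, hd⟩ := h n h0
      have h1 : f - (PowerSeries.coeff n f / PowerSeries.coeff n u) • u ∈ U := by
        apply ih (n+1) (by omega) (by omega)
        rw [PowerSeries.X_pow_dvd_iff] at *
        intro m hm
        rcases Nat.lt_succ_iff_lt_or_eq.1 hm with hm | rfl
        · simp [hf m hm, hd m hm]
        · simp [div_mul_cancel₀ _ hc]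
      have := U.add_mem h1 (U.smul_mem (PowerSeries.coeff n f / PowerSeries.coeff n u) hu)
      simpa using this
  intro f
  exact key N n0 le_rfl (by omega) _ (dvd_mul_right _ _)

def valSet (V : Submodule ℂ 𝒪) : Set ℕ := {n | ∃ x ∈ V, x ≠ (0:𝒪) ∧ ord x = n}

lemma mem_valSet_of {V : Submodule ℂ 𝒪} {N : ℕ}
    (hN : ∀ f : 𝒪, (PowerSeries.X : 𝒪)^N * f ∈ V) {n : ℕ} (hn : N ≤ n) : n ∈ valSet V := by
  refine ⟨(PowerSeries.X : 𝒪)^n, ?_, pow_ne_zero _ PowerSeries.X_ne_zero, ord_X_pow n⟩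
  have := hN ((PowerSeries.X : 𝒪)^(n-N))
  rwa [← pow_add, Nat.add_sub_cancel' hn] at this

lemma fill' (V : Submodule ℂ 𝒪) (N n0 : ℕ) (hN : ∀ f : 𝒪, (PowerSeries.X : 𝒪)^N * f ∈ V)
    (h : ∀ n, n0 ≤ n → n ∈ valSet V) : ∀ f : 𝒪, (PowerSeries.X : 𝒪)^n0 * f ∈ V := by
  refine fill V N n0 hN fun n hn => ?_
  obtain ⟨x, hx, h0, rfl⟩ := h n hn
  exact ⟨x, hx, ord_spec h0, X_pow_ord_dvd x⟩

lemma compl_finite {V : Submodule ℂ 𝒪} {N : ℕ}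
    (hN : ∀ f : 𝒪, (PowerSeries.X : 𝒪)^N * f ∈ V) : (valSet V)ᶜ.Finite := by
  refine (Set.finite_Iio N).subset fun n hn => ?_
  by_contra h
  exact hn (mem_valSet_of hN (not_lt.1 h))

def coW (S : Set ℕ) : Submodule ℂ 𝒪 where
  carrier := {f | ∀ n ∈ S, PowerSeries.coeff n f = 0}
  add_mem' := by
    intro a b ha hb n hn
    simp [ha n hn, hb n hn]
  zero_mem' := by intro n _; simp
  smul_mem' := by
    intro r a ha n hn
    simp [ha n hn]

open Classical in
def coWEquiv (S : Set ℕ) : coW S ≃ₗ[ℂ] ((Sᶜ : Set ℕ) → ℂ) where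
  toFun f n := PowerSeries.coeff n.1 f.1
  map_add' := by intro x y; ext n; simp
  map_smul' := by intro r x; ext n; simp
  invFun g := ⟨PowerSeries.mk fun n => if h : n ∈ Sᶜ then g ⟨n, h⟩ else 0, by
    intro n hn
    simp [hn]⟩
  left_inv := by
    intro f
    ext n
    by_cases h : n ∈ S
    · simp [h, f.2 n h]
    · simp [h]
  right_inv := by
    intro g
    ext n
    have := n.2
    simp only [PowerSeries.coeff_mk]
    rw [dif_pos this]

lemma isCompl_coW (V : Submodule ℂ 𝒪) (N : ℕ) (hN : ∀ f : 𝒪, (PowerSeries.X : 𝒪)^N * f ∈ V) :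
    IsCompl V (coW (valSet V)) := by
  constructor
  · rw [Submodule.disjoint_def]
    intro x hx hW
    by_contra h0
    exact ord_spec h0 (hW _ ⟨x, hx, h0, rfl⟩)
  · rw [codisjoint_iff, eq_top_iff]
    intro f _
    have := fill (V ⊔ coW (valSet V)) N 0 (fun f => Submodule.mem_sup_left (hN f)) ?_ f
    · simpa using this
    intro n _
    by_cases hn : n ∈ valSet V
    · obtain ⟨x, hx, h0, rfl⟩ := hn
      exact ⟨x, Submodule.mem_sup_left hx, ord_spec h0, X_pow_ord_dvd x⟩
    · refine ⟨(PowerSeries.X : 𝒪)^n, Submodule.mem_sup_right ?_, by simp, dvd_rfl⟩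
      intro m hm
      rw [PowerSeries.coeff_X_pow, if_neg]
      rintro rfl
      exact hn hm

lemma finrank_quot (V : Submodule ℂ 𝒪) (N : ℕ)
    (hN : ∀ f : 𝒪, (PowerSeries.X : 𝒪)^N * f ∈ V) :
    FiniteDimensional ℂ (𝒪 ⧸ V) ∧ Module.finrank ℂ (𝒪 ⧸ V) = (valSet V)ᶜ.ncard := by
  have e := (Submodule.quotientEquivOfIsCompl V _ (isCompl_coW V N hN)).trans
    (coWEquiv (valSet V))
  have hfin := compl_finite hN
  have : Fintype ((valSet V)ᶜ : Set ℕ) := hfin.fintype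
  refine ⟨Module.Finite.equiv e.symm, ?_⟩
  rw [e.finrank_eq, Module.finrank_fintype_fun_eq_card, Set.ncard_eq_toFinset_card',
    Set.toFinset_card]

lemma shift_ncard (Δ T : Set ℕ) (a : ℕ) (hfin : Δᶜ.Finite)
    (hT : ∀ n, n ∈ T ↔ a ≤ n ∧ n - a ∈ Δ) : Tᶜ.ncard = a + Δᶜ.ncard := by
  have h : Tᶜ = Set.Iio a ∪ (fun n => a + n) '' Δᶜ := by
    ext n
    simp only [Set.mem_compl_iff, hT, Set.mem_union, Set.mem_Iio, Set.mem_image]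
    constructor
    · intro h
      by_cases hn : n < a
      · exact Or.inl hn
      · exact Or.inr ⟨n - a, fun h' => h ⟨by omega, h'⟩, by omega⟩
    · rintro (h | ⟨m, hm, rfl⟩) ⟨h1, h2⟩
      · omega
      · exact hm (by simpa using h2)
  rw [h, Set.ncard_union_eq _ (Set.finite_Iio a) (hfin.image _),
    Set.ncard_image_of_injective _ (add_right_injective a)]
  · congr 1
    rw [Set.ncard_eq_toFinset_card']
    simp
  · rw [Set.disjoint_left]
    rintro n hn ⟨m, _, rfl⟩
    simp at hn

section
variable {R : Subalgebra ℂ 𝒪} {c : ℕ}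

lemma R_valSet : SGamma R = valSet (Subalgebra.toSubmodule R) := rfl

lemma gaps_finite (hc : ∀ f : 𝒪, (PowerSeries.X : 𝒪)^c * f ∈ R) : (Gaps R).Finite :=
  compl_finite (V := Subalgebra.toSubmodule R) hc

lemma DeltaM_valSet (M : Submodule ↥R 𝒪) : DeltaM R M = valSet (M.restrictScalars ℂ) := rfl

lemma mul_mem_M {M : Submodule ↥R 𝒪} {r x : 𝒪} (hr : r ∈ R) (hx : x ∈ M) : r * x ∈ M :=
  M.smul_mem ⟨r, hr⟩ hx

lemma unit_of_ord {x : 𝒪} (h0 : x ≠ 0) (h : ord x = 0) : IsUnit x := by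
  have := ord_spec h0
  rw [h] at this
  rw [PowerSeries.isUnit_iff_constantCoeff]
  simpa using this

lemma std_cond (hc : ∀ f : 𝒪, (PowerSeries.X : 𝒪)^c * f ∈ R) {M : Submodule ↥R 𝒪}
    (hM : ∃ x ∈ M, x ≠ (0:𝒪) ∧ ord x = 0) (f : 𝒪) : (PowerSeries.X : 𝒪)^c * f ∈ M := by
  obtain ⟨x, hx, h0, h⟩ := hM
  obtain ⟨y, hy⟩ := (unit_of_ord h0 h).exists_left_inv
  have := mul_mem_M (hc (f * y)) hx
  rwa [mul_assoc, mul_assoc, hy, mul_one] at this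

lemma gamma_add {M : Submodule ↥R 𝒪} {k n : ℕ} (hk : k ∈ SGamma R) (hn : n ∈ DeltaM R M) :
    k + n ∈ DeltaM R M := by
  obtain ⟨r, hr, hr0, rfl⟩ := hk
  obtain ⟨x, hx, hx0, rfl⟩ := hn
  exact ⟨r * x, mul_mem_M hr hx, mul_ne_zero hr0 hx0, ord_mul hr0 hx0⟩

lemma gamma_sub {M : Submodule ↥R 𝒪} (hM : ∃ x ∈ M, x ≠ (0:𝒪) ∧ ord x = 0) :
    SGamma R ⊆ DeltaM R M := fun _ hk => gamma_add hk hM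

lemma compl_Delta {M : Submodule ↥R 𝒪} (hM : ∃ x ∈ M, x ≠ (0:𝒪) ∧ ord x = 0) :
    (DeltaM R M)ᶜ = Gaps R \ DeltaM R M := by
  ext n
  exact ⟨fun h => ⟨fun h' => h (gamma_sub hM h'), h⟩, fun h => h.2⟩

lemma card_Delta (hc : ∀ f : 𝒪, (PowerSeries.X : 𝒪)^c * f ∈ R) {M : Submodule ↥R 𝒪}
    (hM : ∃ x ∈ M, x ≠ (0:𝒪) ∧ ord x = 0) :
    (Dset R M).ncard + (DeltaM R M)ᶜ.ncard = (Gaps R).ncard := by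
  rw [compl_Delta hM, Dset, Set.inter_comm]
  exact Set.ncard_inter_add_ncard_sdiff_eq_ncard _ _ (gaps_finite hc)

lemma large_mem (hc : ∀ f : 𝒪, (PowerSeries.X : 𝒪)^c * f ∈ R) {M : Submodule ↥R 𝒪}
    (hM : ∃ x ∈ M, x ≠ (0:𝒪) ∧ ord x = 0) {n : ℕ}
    (hn : 2 * (Gaps R).ncard ≤ n + (Dset R M).ncard) : n ∈ DeltaM R M := by
  by_contra hnot
  have hcard := card_Delta hc hM
  have hG := gaps_finite hc
  have hD : (DeltaM R M)ᶜ.Finite := by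
    rw [compl_Delta hM]; exact hG.subset Set.sdiff_subset
  have hsub : Set.Iic n ⊆ Gaps R ∪ (fun k => n - k) '' (DeltaM R M)ᶜ := by
    intro k hk
    simp only [Set.mem_Iic] at hk
    by_cases hg : k ∈ SGamma R
    · refine Or.inr ⟨n - k, fun h => hnot ?_, by simp only; omega⟩
      have := gamma_add hg h
      rwa [Nat.add_sub_cancel' hk] at this
    · exact Or.inl hg
  have h1 := Set.ncard_le_ncard hsub (hG.union (hD.image _))
  have h2 := Set.ncard_union_le (Gaps R) ((fun k => n - k) '' (DeltaM R M)ᶜ)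
  have h3 := Set.ncard_image_le (f := fun k => n - k) hD
  have h4 : (Set.Iic n).ncard = n + 1 := by
    rw [Set.ncard_eq_toFinset_card']; simp
  omega

lemma std_fg (hc : ∀ f : 𝒪, (PowerSeries.X : 𝒪)^c * f ∈ R) {M : Submodule ↥R 𝒪}
    (hM : ∃ x ∈ M, x ≠ (0:𝒪) ∧ ord x = 0) : M.FG := by
  obtain ⟨x, hx, h0, h⟩ := hM
  let P : Submodule ↥R 𝒪 := Submodule.span R {x}
  have hxP : x ∈ P := Submodule.mem_span_singleton_self x
  have hfd := (finrank_quot (P.restrictScalars ℂ) c (std_cond hc ⟨x, hxP, h0, h⟩)).1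
  have hfd' : Module.Finite ℂ (𝒪 ⧸ P) := hfd
  apply Submodule.fg_of_fg_map_of_fg_inf_ker P.mkQ
  · have : ((M.map P.mkQ).restrictScalars ℂ).FG := IsNoetherian.noetherian _
    exact Submodule.FG.of_restrictScalars ℂ this
  · rw [Submodule.ker_mkQ, inf_eq_right.2]
    · exact Submodule.fg_span_singleton x
    · rw [Submodule.span_le]; simpa using hx

end

/-- (a) For a standard module `𝓜°` with `|D_{𝓜°}| = d°` and `0 ≤ a ≤ d°`, the
`ℛ`-submodule `z^a𝓜°` satisfies `z^{2δ}𝒪 ⊆ z^a𝓜°` and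
`dim_ℂ(𝒪/z^a𝓜°) = δ − d° + a`.
(b) Conversely, if `z^{2δ}𝒪 ⊆ 𝓜` and `dim_ℂ(𝒪/𝓜) = δ − d` with `0 ≤ d ≤ δ`,
then with `a = min{ν(x) : 0 ≠ x ∈ 𝓜}` every element of `𝓜` is divisible by `z^a`
and `𝓜° = {f : z^a f ∈ 𝓜}` is a standard module with `|D_{𝓜°}| = d + a`. -/
theorem statement2 (R : Subalgebra ℂ 𝒪) (c : ℕ) (hR : HasConductor R c) :
    (∀ (M0 : Submodule ↥R 𝒪), IsStd R M0 → ∀ d0 a : ℕ,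
      (Dset R M0).ncard = d0 → a ≤ d0 →
      (∀ f : 𝒪, (PowerSeries.X : 𝒪)^(2 * (Gaps R).ncard) * f ∈
          Submodule.map (LinearMap.mulLeft ↥R ((PowerSeries.X : 𝒪)^a)) M0) ∧
      FiniteDimensional ℂ
        (𝒪 ⧸ (Submodule.map (LinearMap.mulLeft ↥R ((PowerSeries.X : 𝒪)^a)) M0).restrictScalars ℂ) ∧
      Module.finrank ℂ
        (𝒪 ⧸ (Submodule.map (LinearMap.mulLeft ↥R ((PowerSeries.X : 𝒪)^a)) M0).restrictScalars ℂ)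
        = (Gaps R).ncard - d0 + a) ∧
    (∀ (M : Submodule ↥R 𝒪) (d : ℕ), d ≤ (Gaps R).ncard →
      (∀ f : 𝒪, (PowerSeries.X : 𝒪)^(2 * (Gaps R).ncard) * f ∈ M) →
      FiniteDimensional ℂ (𝒪 ⧸ M.restrictScalars ℂ) →
      Module.finrank ℂ (𝒪 ⧸ M.restrictScalars ℂ) = (Gaps R).ncard - d →
      (∀ x ∈ M, ∃ h : 𝒪, x = (PowerSeries.X : 𝒪)^(sInf (DeltaM R M)) * h) ∧
      IsStd R (Submodule.comap
        (LinearMap.mulLeft ↥R ((PowerSeries.X : 𝒪)^(sInf (DeltaM R M)))) M) ∧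
      (Dset R (Submodule.comap
        (LinearMap.mulLeft ↥R ((PowerSeries.X : 𝒪)^(sInf (DeltaM R M)))) M)).ncard
        = d + sInf (DeltaM R M)) := by
  obtain ⟨_, hc, _⟩ := hR
  constructor
  · intro M0 hM d0 a hd ha
    have hM' := hM.2
    have hcard := card_Delta hc hM'
    have hfull := fill' (M0.restrictScalars ℂ) c (2 * (Gaps R).ncard - a) (std_cond hc hM')
      (fun n hn => large_mem hc hM' (by omega))
    have hmap : ∀ f : 𝒪, (PowerSeries.X : 𝒪)^(2 * (Gaps R).ncard) * f ∈
          Submodule.map (LinearMap.mulLeft ↥R ((PowerSeries.X : 𝒪)^a)) M0 := by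
      intro f
      refine ⟨_, hfull f, ?_⟩
      simp only [LinearMap.mulLeft_apply]
      rw [← mul_assoc, ← pow_add]
      congr 2
      omega
    obtain ⟨h1, h2⟩ := finrank_quot
      ((Submodule.map (LinearMap.mulLeft ↥R ((PowerSeries.X : 𝒪)^a)) M0).restrictScalars ℂ) _ hmap
    refine ⟨hmap, h1, ?_⟩
    rw [h2, shift_ncard (DeltaM R M0) _ a (compl_finite (V := M0.restrictScalars ℂ)
      (std_cond hc hM'))]
    · omega
    · intro n
      constructor
      · rintro ⟨_, ⟨y, hy, rfl⟩, h0, rfl⟩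
        simp only [LinearMap.mulLeft_apply] at *
        have hy0 : y ≠ 0 := right_ne_zero_of_mul h0
        rw [ord_X_pow_mul a hy0]
        exact ⟨by omega, y, hy, hy0, by omega⟩
      · rintro ⟨hn, y, hy, hy0, he⟩
        refine ⟨_, ⟨y, hy, rfl⟩, ?_, ?_⟩
        · exact mul_ne_zero (pow_ne_zero _ PowerSeries.X_ne_zero) hy0
        · simp only [LinearMap.mulLeft_apply]
          rw [ord_X_pow_mul a hy0]
          omega
  · intro M d hd hM _ hrank
    have hne : (DeltaM R M).Nonempty := ⟨_, mem_valSet_of (V := M.restrictScalars ℂ) hM le_rfl⟩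
    have hmin := Nat.sInf_mem hne
    have hle : ∀ n ∈ DeltaM R M, sInf (DeltaM R M) ≤ n := fun n hn => Nat.sInf_le hn
    obtain ⟨_, h2⟩ := finrank_quot (M.restrictScalars ℂ) _ hM
    rw [hrank] at h2
    change _ = (DeltaM R M)ᶜ.ncard at h2
    generalize sInf (DeltaM R M) = a at *
    have hdvd : ∀ x ∈ M, ∃ h : 𝒪, x = (PowerSeries.X : 𝒪)^a * h := by
      intro x hx
      by_cases h0 : x = 0
      · exact ⟨0, by simp [h0]⟩
      · exact (pow_dvd_pow _ (hle _ ⟨x, hx, h0, rfl⟩)).trans (X_pow_ord_dvd x)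
    have hst : ∃ x ∈ Submodule.comap (LinearMap.mulLeft ↥R ((PowerSeries.X : 𝒪)^a)) M,
        x ≠ (0:𝒪) ∧ ord x = 0 := by
      obtain ⟨x, hx, h0, he⟩ := hmin
      obtain ⟨y, rfl⟩ := hdvd x hx
      have hy0 : y ≠ 0 := right_ne_zero_of_mul h0
      rw [ord_X_pow_mul a hy0] at he
      exact ⟨y, hx, hy0, by omega⟩
    refine ⟨hdvd, ⟨std_fg hc hst, hst⟩, ?_⟩
    have hcard := card_Delta hc hst
    have hsh := shift_ncard
      (DeltaM R (Submodule.comap (LinearMap.mulLeft ↥R ((PowerSeries.X : 𝒪)^a)) M))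
      (DeltaM R M) a (compl_finite (V := Submodule.restrictScalars ℂ
        (Submodule.comap (LinearMap.mulLeft ↥R ((PowerSeries.X : 𝒪)^a)) M)) (std_cond hc hst)) ?_
    · omega
    · intro n
      constructor
      · rintro ⟨x, hx, h0, rfl⟩
        obtain ⟨y, rfl⟩ := hdvd x hx
        have hy0 : y ≠ 0 := right_ne_zero_of_mul h0
        rw [ord_X_pow_mul a hy0]
        exact ⟨by omega, y, hx, hy0, by omega⟩
      · rintro ⟨hn, y, hy, hy0, he⟩
        refine ⟨_, hy, ?_, ?_⟩
        · exact mul_ne_zero (pow_ne_zero _ PowerSeries.X_ne_zero) hy0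
        · simp only [LinearMap.mulLeft_apply]
          rw [ord_X_pow_mul a hy0]
          omega


end
end

section
/- Let 𝓜 be a standard module, let g ∈ D_𝓜, and let 𝓜' ⊆ 𝓜 be an ℛ-submodule with 𝔪𝓜 ⊆ 𝓜'. Write 𝓜̄ = 𝓜/𝔪𝓜, let 𝓜̄' be the image of 𝓜' in 𝓜̄, and let 𝓜̄^{(j)} be the image of 𝓜 ∩ z^j𝒪 in 𝓜̄. Assume dim_ℂ((𝓜̄' + 𝓜̄^{(g)})/(𝓜̄' + 𝓜̄^{(g+1)})) = 1 and that 𝓜̄ = 𝓜̄' ⊕ ℂm̄ for some m̄ ∈ 𝓜̄^{(g)} whose class generates the quotient (𝓜̄' + 𝓜̄^{(g)})/(𝓜̄' + 𝓜̄^{(g+1)}). Then 𝓜' is a standard module and D_{𝓜'} = D_𝓜 ∖ {g}. -/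
open PowerSeries

noncomputable section

theorem ord_iff (x : 𝒪) (n : ℕ) : (x ≠ 0 ∧ ord x = n) ↔
    (PowerSeries.coeff n x ≠ 0 ∧ ∀ k < n, PowerSeries.coeff k x = 0) := by
  constructor
  · rintro ⟨hx, rfl⟩
    have hne : {n : ℕ | PowerSeries.coeff n x ≠ 0}.Nonempty := by
      by_contra h
      rw [Set.not_nonempty_iff_eq_empty] at h
      apply hx
      ext n
      by_contra h2
      have : n ∈ {n : ℕ | PowerSeries.coeff n x ≠ 0} := by simpa using h2
      rw [h] at this
      exact this
    refine ⟨Nat.sInf_mem hne, fun k hk => ?_⟩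
    by_contra h2
    exact Nat.notMem_of_lt_sInf hk h2
  · rintro ⟨h1, h2⟩
    refine ⟨fun h => h1 (by simp [h]), ?_⟩
    apply le_antisymm
    · exact Nat.sInf_le h1
    · apply le_csInf ⟨n, h1⟩
      intro b hb
      by_contra hlt
      exact hb (h2 b (not_le.mp hlt))

theorem mem_zO_iff (x : 𝒪) (j : ℕ) : x ∈ zO j ↔ ∀ k < j, PowerSeries.coeff k x = 0 := by
  rw [← PowerSeries.X_pow_dvd_iff]
  constructor
  · rintro ⟨y, rfl⟩
    exact ⟨y, rfl⟩
  · rintro ⟨y, rfl⟩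
    exact ⟨y, rfl⟩

theorem mem_DeltaM_iff (R : Subalgebra ℂ 𝒪) (M : Submodule ↥R 𝒪) (n : ℕ) :
    n ∈ DeltaM R M ↔ ∃ x ∈ M, PowerSeries.coeff n x ≠ 0 ∧ ∀ k < n, PowerSeries.coeff k x = 0 := by
  simp only [DeltaM, Set.mem_setOf_eq, ord_iff]

theorem fg_of_unit (R : Subalgebra ℂ 𝒪) (c : ℕ)
    (hR : ∀ f : 𝒪, (PowerSeries.X : 𝒪)^c * f ∈ R) (M : Submodule ↥R 𝒪)
    (u : 𝒪) (hu : u ∈ M) (hu0 : PowerSeries.coeff 0 u ≠ 0) : M.FG := by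
  classical
  let f : 𝒪 →ₗ[ℂ] (Fin c → ℂ) := LinearMap.pi fun i => PowerSeries.coeff (R := ℂ) (i : ℕ)
  have hfg : ((M.restrictScalars ℂ).map f).FG := IsNoetherian.noetherian _
  obtain ⟨T, hT⟩ := hfg
  have hTs : (T : Set (Fin c → ℂ)) ⊆ f '' (M : Set 𝒪) := by
    intro t ht
    have : t ∈ (M.restrictScalars ℂ).map f := hT ▸ Submodule.subset_span ht
    obtain ⟨x, hx, rfl⟩ := this
    exact ⟨x, hx, rfl⟩
  obtain ⟨S, hS, rfl⟩ := Finset.subset_set_image_iff.mp hTs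
  refine ⟨insert u S, le_antisymm ?_ ?_⟩
  · rw [Submodule.span_le]
    intro x hx
    rw [Finset.coe_insert] at hx
    rcases hx with rfl | hx
    · exact hu
    · exact hS hx
  · intro x hx
    have h1 : f x ∈ (M.restrictScalars ℂ).map f := ⟨x, hx, rfl⟩
    rw [← hT, Finset.coe_image, ← Submodule.map_span] at h1
    obtain ⟨s, hs, hsx⟩ := h1
    have hsR : s ∈ Submodule.span R (↑(insert u S) : Set 𝒪) := by
      have h2 : Submodule.span ℂ (S : Set 𝒪) ≤
          (Submodule.span R (↑(insert u S) : Set 𝒪)).restrictScalars ℂ := by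
        rw [Submodule.span_le]
        intro y hy
        exact Submodule.subset_span (by simp [Finset.mem_coe.mp hy])
      exact h2 hs
    have hk : ∀ k < c, PowerSeries.coeff k (x - s) = 0 := by
      intro k hk
      have := congrFun hsx ⟨k, hk⟩
      simp only [f, LinearMap.pi_apply] at this
      rw [map_sub, this, sub_self]
    rw [← PowerSeries.X_pow_dvd_iff] at hk
    obtain ⟨h, hh⟩ := hk
    have hinv : u⁻¹ * u = 1 := PowerSeries.inv_mul_cancel u (by simpa using hu0)
    have h3 : x - s = (⟨PowerSeries.X ^ c * (h * u⁻¹), hR _⟩ : R) • u := by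
      rw [hh, Subalgebra.smul_def, smul_eq_mul]
      linear_combination (-(PowerSeries.X ^ c * h)) * hinv
    have h4 : x - s ∈ Submodule.span R (↑(insert u S) : Set 𝒪) := by
      rw [h3]
      exact Submodule.smul_mem _ _ (Submodule.subset_span (by simp))
    simpa using add_mem h4 hsR

/-- Nakayama-type lemma: if `𝓜' ⊆ 𝓜` with `𝔪𝓜 ⊆ 𝓜'`, `g ∈ D_𝓜`,
`dim((𝓜̄'+𝓜̄^{(g)})/(𝓜̄'+𝓜̄^{(g+1)})) = 1`, and `𝓜̄ = 𝓜̄' ⊕ ℂm̄` for `m̄ ∈ 𝓜̄^{(g)}`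
whose class generates that quotient, then `𝓜'` is a standard module with
`D_{𝓜'} = D_𝓜 ∖ {g}`. (Bar-space statements are encoded inside `𝒪` using `𝔪𝓜 ⊆ 𝓜'`.) -/
theorem statement6 (R : Subalgebra ℂ 𝒪) (c : ℕ) (hR : HasConductor R c)
    (M M' : Submodule ↥R 𝒪) (hstd : IsStd R M)
    (gp : ℕ) (hg : gp ∈ Dset R M)
    (hsub : M' ≤ M) (hmM : mSmul R M ≤ M'.restrictScalars ℂ)
    (hdim : quotDim (M'.restrictScalars ℂ ⊔ ((M.restrictScalars ℂ) ⊓ zO gp))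
                    (M'.restrictScalars ℂ ⊔ ((M.restrictScalars ℂ) ⊓ zO (gp+1))) = 1)
    (mbar : 𝒪)
    (hmbar : mbar ∈ ((M.restrictScalars ℂ) ⊓ zO gp) ⊔ mSmul R M)
    (hdirect : mbar ∉ M'.restrictScalars ℂ)
    (hsum : M.restrictScalars ℂ = M'.restrictScalars ℂ ⊔ (ℂ ∙ mbar))
    (hgen : mbar ∉ M'.restrictScalars ℂ ⊔ ((M.restrictScalars ℂ) ⊓ zO (gp+1))) :
    IsStd R M' ∧ Dset R M' = Dset R M \ {gp} := by
  obtain ⟨m0, hm0, w, hw, hmw⟩ := Submodule.mem_sup.mp hmbar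
  have hwM' : w ∈ M' := hmM hw
  obtain ⟨hm0M, hm0z⟩ := hm0
  rw [SetLike.mem_coe, mem_zO_iff] at hm0z
  have hm0M : m0 ∈ M := hm0M
  -- the key non-membership
  have key : ∀ y ∈ M', ∀ x ∈ M, (∀ k < gp + 1, PowerSeries.coeff k x = 0) → m0 ≠ y + x := by
    intro y hy x hx hxz h
    apply hgen
    rw [← hmw, h, add_right_comm]
    exact Submodule.add_mem_sup (add_mem hy hwM') ⟨hx, (mem_zO_iff _ _).mpr hxz⟩
  have hm0g : PowerSeries.coeff gp m0 ≠ 0 := by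
    intro h
    refine key 0 (zero_mem _) m0 hm0M ?_ (by simp)
    intro k hk
    rcases Nat.lt_succ_iff_lt_or_eq.mp hk with h1 | rfl
    · exact hm0z k h1
    · exact h
  have hdec : ∀ x ∈ M, ∃ y ∈ M', ∃ a : ℂ, x = y + a • m0 := by
    intro x hx
    have : x ∈ M.restrictScalars ℂ := hx
    rw [hsum] at this
    obtain ⟨y, hy, z, hz, rfl⟩ := Submodule.mem_sup.mp this
    obtain ⟨a, rfl⟩ := Submodule.mem_span_singleton.mp hz
    have haw : a • w ∈ M'.restrictScalars ℂ := Submodule.smul_mem _ a hwM'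
    refine ⟨y + a • w, add_mem hy haw, a, ?_⟩
    rw [← hmw, smul_add]
    abel
  have hDelta : ∀ n, n ∈ DeltaM R M' ↔ n ∈ DeltaM R M ∧ n ≠ gp := by
    intro n
    rw [mem_DeltaM_iff, mem_DeltaM_iff]
    constructor
    · rintro ⟨x, hx, h1, h2⟩
      refine ⟨⟨x, hsub hx, h1, h2⟩, ?_⟩
      rintro rfl
      set a : ℂ := PowerSeries.coeff n m0 / PowerSeries.coeff n x with ha
      have hax : a • x ∈ M'.restrictScalars ℂ := Submodule.smul_mem _ a hx
      have hax' : a • x ∈ M' := hax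
      refine key (a • x) hax (m0 - a • x) (sub_mem hm0M (hsub hax')) ?_ (by abel)
      intro k hk
      rcases Nat.lt_succ_iff_lt_or_eq.mp hk with h3 | rfl
      · simp [h2 k h3, hm0z k h3]
      · simp only [map_sub, map_smul, smul_eq_mul, ha]
        field_simp
        simp
    · rintro ⟨⟨x, hx, h1, h2⟩, hne⟩
      obtain ⟨y, hy, a, rfl⟩ := hdec x hx
      rcases lt_or_gt_of_ne hne with hlt | hgt
      · refine ⟨y, hy, ?_, ?_⟩
        · simpa [hm0z n hlt] using h1
        · intro k hk
          simpa [hm0z k (hk.trans hlt)] using h2 k hk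
      · by_cases ha : a = 0
        · subst ha
          exact ⟨y, hy, by simpa using h1, by simpa using h2⟩
        · exfalso
          have hay : (-a⁻¹) • y ∈ M'.restrictScalars ℂ := Submodule.smul_mem _ _ hy
          have hx' : y + a • m0 ∈ M.restrictScalars ℂ := hx
          have hax : a⁻¹ • (y + a • m0) ∈ M.restrictScalars ℂ := Submodule.smul_mem _ _ hx'
          refine key _ hay _ hax ?_ ?_
          · intro k hk
            rw [map_smul, h2 k (by omega), smul_zero]
          · rw [smul_add, smul_smul, inv_mul_cancel₀ ha, one_smul, neg_smul]
            abel
  have hgp0 : (0 : ℕ) ≠ gp := by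
    rintro rfl
    apply hg.2
    exact ⟨1, one_mem _, (ord_iff 1 0).mpr (by simp)⟩
  have h0 : 0 ∈ DeltaM R M' := (hDelta 0).mpr ⟨hstd.2, hgp0⟩
  refine ⟨⟨?_, h0⟩, ?_⟩
  · obtain ⟨u, hu, hu0, -⟩ := (mem_DeltaM_iff _ _ _).mp h0
    exact fg_of_unit R c hR.2.1 M' u hu hu0
  · ext n
    simp only [Dset, Set.mem_inter_iff, Set.mem_diff, Set.mem_singleton_iff, hDelta]
    tauto

end
end
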